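/- arXiv:1706.04066 — 3 statements merged into one kernel-verified Lean document; each statement's English description precedes it below -/
import Mathlib

section
/- Let ν > 0, r ∈ [0,1], and set ν₀ = min(ν, 1/2). Then for every z > 0 it holds z^{ν+r} K_ν(z) ≤ (ν + r − ν₀)^r · 2^{ν−1} Γ(ν). -/
/-- The modified Bessel function of the second kind,
`K_ν(z) = ∫₀^∞ exp(−z cosh t) cosh(ν t) dt`. -/
noncomputable def besselK (ν z : ℝ) : ℝ :=
  ∫ t in Set.Ioi (0:ℝ), Real.exp (-z * Real.cosh t) * Real.cosh (ν * t)

open Real Set Filter Topology MeasureTheory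

theorem bk_gamma (ν b : ℝ) (hν : 0 < ν) (hb : 0 < b) :
    Integrable (fun t : ℝ => exp (-b * exp t) * exp (ν * t)) ∧
    ∫ t : ℝ, exp (-b * exp t) * exp (ν * t) = (1 / b) ^ ν * Real.Gamma ν := by
  have himg : Set.image exp univ = Ioi (0:ℝ) := by rw [image_univ, range_exp]
  have hd : ∀ x ∈ (univ : Set ℝ), HasDerivWithinAt exp (exp x) univ x :=
    fun x _ => (Real.hasDerivAt_exp x).hasDerivWithinAt
  have heq : (fun t : ℝ => |exp t| • ((exp t) ^ (ν - 1) * exp (-(b * exp t)))) =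
      fun t : ℝ => exp (-b * exp t) * exp (ν * t) := by
    funext t
    rw [abs_of_pos (exp_pos t), ← Real.exp_mul, smul_eq_mul, ← mul_assoc, ← Real.exp_add,
      mul_comm]
    congr 2 <;> ring
  have hI : IntegrableOn (fun x : ℝ => x ^ (ν - 1) * exp (-(b * x))) (Ioi 0) := by
    have := integrableOn_rpow_mul_exp_neg_mul_rpow (p := 1) (s := ν - 1) (b := b)
      (by linarith) one_pos hb
    simpa [neg_mul] using this
  have h1 := (integrableOn_image_iff_integrableOn_abs_deriv_smul MeasurableSet.univ hd
    exp_injective.injOn (fun x : ℝ => x ^ (ν - 1) * exp (-(b * x)))).1 (by rwa [himg])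
  have h2 := integral_image_eq_integral_abs_deriv_smul MeasurableSet.univ hd
    exp_injective.injOn (fun x : ℝ => x ^ (ν - 1) * exp (-(b * x)))
  rw [himg, Real.integral_rpow_mul_exp_neg_mul_Ioi hν hb] at h2
  rw [heq] at h1 h2
  rw [setIntegral_univ] at h2
  exact ⟨integrableOn_univ.1 h1, h2.symm⟩

theorem bk_exp_half_le_cosh (t : ℝ) : exp t / 2 ≤ cosh t := by
  rw [Real.cosh_eq]; have := exp_pos (-t); linarith

theorem bk_weight_le (z t : ℝ) (hz : 0 < z) : exp (-z * cosh t) ≤ exp (-(z/2) * exp t) := by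
  apply Real.exp_le_exp.2
  have := mul_le_mul_of_nonneg_left (bk_exp_half_le_cosh t) hz.le
  linarith

theorem bk_cosh_le_exp (t : ℝ) (ht : 0 ≤ t) : cosh t ≤ exp t := by
  rw [Real.cosh_eq]
  have : exp (-t) ≤ exp t := Real.exp_le_exp.2 (by linarith)
  linarith

theorem bk_abs_sinh_le (t : ℝ) : |sinh t| ≤ cosh t := by
  have h1 := exp_pos t
  have h2 := exp_pos (-t)
  rw [Real.cosh_eq, Real.sinh_eq, abs_le]
  constructor <;> linarith

theorem bk_integrable (z μ C : ℝ) (hz : 0 < z) (hμ : 0 < μ) (f : ℝ → ℝ) (hf : Continuous f)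
    (hb : ∀ t, 0 ≤ t → |f t| ≤ C * exp (μ * t)) :
    IntegrableOn (fun t => exp (-z * cosh t) * f t) (Ioi 0) := by
  have hg := ((bk_gamma μ (z/2) hμ (by linarith)).1.const_mul C).integrableOn (s := Ioi 0)
  refine Integrable.mono' hg ?_ ?_
  · apply Continuous.aestronglyMeasurable
    have := Real.continuous_cosh
    fun_prop
  · refine (ae_restrict_iff' measurableSet_Ioi).2 (ae_of_all _ fun t ht => ?_)
    rw [norm_mul, Real.norm_eq_abs, Real.norm_eq_abs, abs_of_pos (exp_pos _)]
    calc exp (-z * cosh t) * |f t| ≤ exp (-(z/2) * exp t) * (C * exp (μ * t)) :=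
          mul_le_mul (bk_weight_le z t hz) (hb t (le_of_lt ht)) (abs_nonneg _) (exp_pos _).le
      _ = _ := by ring

theorem bk_tendsto (z μ C : ℝ) (hz : 0 < z) (f : ℝ → ℝ)
    (hb : ∀ t, 0 ≤ t → |f t| ≤ C * exp (μ * t)) :
    Tendsto (fun t => exp (-z * cosh t) * f t) atTop (𝓝 0) := by
  have h := ((tendsto_rpow_mul_exp_neg_mul_atTop_nhds_zero μ (z/2) (by linarith)).comp
    Real.tendsto_exp_atTop).const_mul C
  rw [mul_zero] at h
  refine squeeze_zero_norm' ?_ h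
  filter_upwards [eventually_ge_atTop 0] with t ht
  rw [norm_mul, Real.norm_eq_abs, Real.norm_eq_abs, abs_of_pos (exp_pos _)]
  calc exp (-z * cosh t) * |f t| ≤ exp (-(z/2) * exp t) * (C * exp (μ * t)) :=
        mul_le_mul (bk_weight_le z t hz) (hb t ht) (abs_nonneg _) (exp_pos _).le
    _ = _ := by
      simp only [Function.comp]
      rw [← Real.exp_mul, mul_comm t μ]; ring

theorem bk_cosh_mul_le (ν t : ℝ) (hν : 0 < ν) (ht : 0 ≤ t) :
    cosh (ν * t) ≤ exp (ν * t) := bk_cosh_le_exp _ (by positivity)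

theorem bk_int0 (ν z : ℝ) (hν : 0 < ν) (hz : 0 < z) :
    IntegrableOn (fun t => exp (-z * cosh t) * cosh (ν * t)) (Ioi 0) := by
  refine bk_integrable z ν 1 hz hν _ (Real.continuous_cosh.comp (by fun_prop)) fun t ht => ?_
  rw [abs_of_pos (cosh_pos _), one_mul]
  exact bk_cosh_mul_le ν t hν ht

theorem bk_int1 (ν z : ℝ) (hν : 0 < ν) (hz : 0 < z) :
    IntegrableOn (fun t => exp (-z * cosh t) * (cosh t * cosh (ν * t))) (Ioi 0) := by
  refine bk_integrable z (1 + ν) 1 hz (by linarith) _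
    (Real.continuous_cosh.mul (Real.continuous_cosh.comp (by fun_prop))) fun t ht => ?_
  rw [abs_of_pos (mul_pos (cosh_pos _) (cosh_pos _)), one_mul, add_mul, one_mul, Real.exp_add]
  exact mul_le_mul (bk_cosh_le_exp t ht) (bk_cosh_mul_le ν t hν ht) (cosh_pos _).le (exp_pos _).le

/-- Bound for `r = 0`. -/
theorem bk_bound0 (ν z : ℝ) (hν : 0 < ν) (hz : 0 < z) :
    z ^ ν * besselK ν z ≤ (2 : ℝ) ^ (ν - 1) * Real.Gamma ν := by
  set h : ℝ → ℝ := fun t => exp (-z * cosh t) * exp (ν * t) with hh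
  obtain ⟨hgi, hge⟩ := bk_gamma ν (z/2) hν (by linarith)
  have hle : ∀ t, h t ≤ exp (-(z/2) * exp t) * exp (ν * t) := fun t =>
    mul_le_mul_of_nonneg_right (bk_weight_le z t hz) (exp_pos _).le
  have hhi : Integrable h := by
    refine Integrable.mono' hgi ?_ (ae_of_all _ fun t => ?_)
    · apply Continuous.aestronglyMeasurable
      have := Real.continuous_cosh
      fun_prop
    · rw [Real.norm_eq_abs, abs_of_pos (mul_pos (exp_pos _) (exp_pos _))]
      exact hle t
  have hneg : ∫ t in Ioi (0:ℝ), h (-t) = ∫ t in Iic (0:ℝ), h t := by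
    simp
  have hsplit : (∫ t in Iic (0:ℝ), h t) + (∫ t in Ioi (0:ℝ), h t) = ∫ t, h t :=
    intervalIntegral.integral_Iic_add_Ioi hhi.integrableOn hhi.integrableOn
  have hK : besselK ν z = 1/2 * ∫ t, h t := by
    rw [← hsplit, ← hneg, ← integral_add hhi.comp_neg.integrableOn hhi.integrableOn, besselK,
      ← integral_const_mul]
    refine setIntegral_congr_fun measurableSet_Ioi fun t _ => ?_
    simp only [hh, Real.cosh_neg]
    rw [Real.cosh_eq (ν * t), mul_neg]; ring
  have hint : ∫ t, h t ≤ (1 / (z/2)) ^ ν * Real.Gamma ν := by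
    rw [← hge]; exact integral_mono hhi hgi hle
  have hz2 : z ^ ν * (1 / (z/2)) ^ ν = 2 ^ ν := by
    rw [← Real.mul_rpow hz.le (by positivity)]
    congr 1; field_simp
  calc z ^ ν * besselK ν z ≤ z ^ ν * (1/2 * ((1 / (z/2)) ^ ν * Real.Gamma ν)) := by
        rw [hK]; gcongr
    _ = (z ^ ν * (1 / (z/2)) ^ ν) * (1/2) * Real.Gamma ν := by ring
    _ = _ := by rw [hz2, Real.rpow_sub_one two_ne_zero]; ring

theorem bk_ftc (z μ C : ℝ) (hz : 0 < z) (hμ : 0 < μ) (q q' : ℝ → ℝ)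
    (hq' : Continuous q') (hd : ∀ t, HasDerivAt q (q' t) t) (h0 : q 0 = 0)
    (hb : ∀ t, 0 ≤ t → |q t| ≤ C * exp (μ * t))
    (hb' : ∀ t, 0 ≤ t → |q' t| ≤ C * exp (μ * t)) :
    IntegrableOn (fun t => exp (-z * cosh t) * (q' t - z * sinh t * q t)) (Ioi 0) ∧
    ∫ t in Ioi (0:ℝ), exp (-z * cosh t) * (q' t - z * sinh t * q t) = 0 := by
  have hqc : Continuous q := continuous_iff_continuousAt.2 fun t => (hd t).continuousAt
  have hC : 0 ≤ C := by
    have := (abs_nonneg _).trans (hb 0 le_rfl)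
    simpa using this
  have hi : IntegrableOn (fun t => exp (-z * cosh t) * (q' t - z * sinh t * q t)) (Ioi 0) := by
    refine bk_integrable z (μ + 1) (C + z * C) hz (by linarith) _ ?_ fun t ht => ?_
    · have := Real.continuous_sinh
      fun_prop
    · have h1 : |sinh t| ≤ exp t := (bk_abs_sinh_le t).trans (bk_cosh_le_exp t ht)
      have h2 : 1 ≤ exp t := Real.one_le_exp ht
      have h3 : |sinh t| * |q t| ≤ exp t * (C * exp (μ * t)) :=
        mul_le_mul h1 (hb t ht) (abs_nonneg _) (exp_pos _).le
      have h4 : C * exp (μ * t) ≤ C * exp (μ * t) * exp t :=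
        le_mul_of_one_le_right (by positivity) h2
      calc |q' t - z * sinh t * q t| ≤ |q' t| + |z * sinh t * q t| := abs_sub _ _
        _ = |q' t| + z * (|sinh t| * |q t|) := by
          rw [abs_mul, abs_mul, abs_of_pos hz]; ring
        _ ≤ C * exp (μ * t) * exp t + z * (exp t * (C * exp (μ * t))) := by
          gcongr
          exact (hb' t ht).trans h4
        _ = _ := by rw [add_mul μ, one_mul, Real.exp_add]; ring
  refine ⟨hi, ?_⟩
  have := integral_Ioi_of_hasDerivAt_of_tendsto' (a := 0)
    (f := fun t => exp (-z * cosh t) * q t) (m := 0)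
    (f' := fun t => exp (-z * cosh t) * (q' t - z * sinh t * q t)) ?_ hi
    (bk_tendsto z μ C hz q hb)
  · rw [this, h0]; simp
  · intro t _
    have h1 := (((Real.hasDerivAt_cosh t).const_mul (-z)).exp).mul (hd t)
    refine HasDerivAt.congr_deriv (f := fun t => exp (-z * cosh t) * q t) h1 ?_
    ring

theorem bk_key_of (ν z m μ C : ℝ) (hν : 0 < ν) (hz : 0 < z) (hμ : 0 < μ) (q q' : ℝ → ℝ)
    (hq' : Continuous q') (hd : ∀ t, HasDerivAt q (q' t) t) (h0 : q 0 = 0)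
    (hb : ∀ t, 0 ≤ t → |q t| ≤ C * exp (μ * t))
    (hb' : ∀ t, 0 ≤ t → |q' t| ≤ C * exp (μ * t))
    (hp : ∀ t, 0 ≤ t → m * cosh (ν * t) - z * ((cosh t - 1) * cosh (ν * t)) ≤
      q' t - z * sinh t * q t) :
    (m + z) * besselK ν z ≤
      z * ∫ t in Ioi (0:ℝ), exp (-z * cosh t) * (cosh t * cosh (ν * t)) := by
  obtain ⟨hi, he⟩ := bk_ftc z μ C hz hμ q q' hq' hd h0 hb hb'
  have i0 := (bk_int0 ν z hν hz).const_mul (m + z)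
  have i1 := (bk_int1 ν z hν hz).const_mul z
  have hle := setIntegral_mono_on (i0.sub i1) hi measurableSet_Ioi (fun t ht => ?_)
  · rw [he] at hle
    have e := integral_sub i0 i1
    rw [integral_const_mul, integral_const_mul] at e
    have hle' := e.symm.trans_le hle
    unfold besselK
    linarith
  · have := mul_le_mul_of_nonneg_left (hp t (le_of_lt ht)) (exp_pos (-z * cosh t)).le
    simp only [Pi.sub_apply]
    refine le_trans (le_of_eq ?_) this
    ring

theorem bk_key (ν z : ℝ) (hν : 0 < ν) (hz : 0 < z) :
    (min ν (1/2) + z) * besselK ν z ≤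
      z * ∫ t in Ioi (0:ℝ), exp (-z * cosh t) * (cosh t * cosh (ν * t)) := by
  have hlin : ∀ t : ℝ, HasDerivAt (fun t => ν * t) ν t := fun t => by
    simpa using (hasDerivAt_id t).const_mul ν
  have hcc : Continuous fun t : ℝ => cosh (ν * t) := Real.continuous_cosh.comp (by fun_prop)
  have hsc : Continuous fun t : ℝ => sinh (ν * t) := Real.continuous_sinh.comp (by fun_prop)
  have hcb : ∀ t : ℝ, 0 ≤ t → |sinh (ν * t)| ≤ exp (ν * t) := fun t ht =>
    (bk_abs_sinh_le _).trans (bk_cosh_mul_le ν t hν ht)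
  rcases le_total ν (1/2) with h | h
  · rw [min_eq_left h]
    refine bk_key_of ν z ν ν (1 + ν) hν hz hν (fun t => sinh (ν * t))
      (fun t => cosh (ν * t) * ν) (by fun_prop) (fun t => (hlin t).sinh) (by simp) ?_ ?_ ?_
    · intro t ht
      have h1 := hcb t ht
      have h2 : 0 ≤ ν * exp (ν * t) := by positivity
      linarith
    · intro t ht
      have h1 := bk_cosh_mul_le ν t hν ht
      rw [abs_of_pos (mul_pos (cosh_pos _) hν)]
      have h2 := exp_pos (ν * t)
      nlinarith
    · intro t ht
      have h1 : cosh (ν * t) ≤ cosh (t - ν * t) := by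
        rw [Real.cosh_le_cosh, abs_of_nonneg (by positivity), abs_of_nonneg (by nlinarith)]
        nlinarith
      rw [Real.cosh_sub] at h1
      have h2 := mul_le_mul_of_nonneg_left h1 hz.le
      linarith
  · rw [min_eq_right h]
    have hpos : ∀ t, 0 < 1 + cosh t := fun t => by have := cosh_pos t; linarith
    have hs1 : ∀ t, |sinh t / (1 + cosh t)| ≤ 1 := fun t => by
      rw [abs_div, abs_of_pos (hpos t), div_le_one (hpos t)]
      have := bk_abs_sinh_le t
      linarith
    have hs2 : ∀ t, |1 / (1 + cosh t)| ≤ 1 := fun t => by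
      rw [abs_div, abs_of_pos (hpos t), div_le_one (hpos t), abs_one]
      have := cosh_pos t
      linarith
    have hsx := Real.continuous_sinh
    have hcx := Real.continuous_cosh
    refine bk_key_of ν z (1/2) ν (1 + ν) hν hz hν
      (fun t => sinh t / (1 + cosh t) * cosh (ν * t))
      (fun t => 1 / (1 + cosh t) * cosh (ν * t) +
        sinh t / (1 + cosh t) * (sinh (ν * t) * ν)) ?_ ?_ (by simp) ?_ ?_ ?_
    · have hne : ∀ t, 1 + cosh t ≠ 0 := fun t => (hpos t).ne'
      fun_prop (disch := exact hne _)
    · intro t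
      have h1 := ((Real.hasDerivAt_sinh t).div ((Real.hasDerivAt_cosh t).const_add 1)
        (hpos t).ne').mul (hlin t).cosh
      refine HasDerivAt.congr_deriv (f := fun t => sinh t / (1 + cosh t) * cosh (ν * t)) h1 ?_
      congr 2
      have := (hpos t).ne'
      have h3 := Real.cosh_sq t
      field_simp
      nlinarith
    · intro t ht
      have h1 := bk_cosh_mul_le ν t hν ht
      have h2 := exp_pos (ν * t)
      rw [abs_mul, abs_of_pos (cosh_pos (ν * t))]
      have h3 := mul_le_mul (hs1 t) h1 (cosh_pos _).le zero_le_one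
      have h4 : 0 ≤ ν * exp (ν * t) := by positivity
      linarith
    · intro t ht
      have h1 := bk_cosh_mul_le ν t hν ht
      have h3 := mul_le_mul (hs2 t) h1 (cosh_pos _).le zero_le_one
      have h4 := mul_le_mul (hs1 t) (hcb t ht) (abs_nonneg _) zero_le_one
      have h5 := mul_le_mul_of_nonneg_right h4 hν.le
      refine (abs_add_le _ _).trans ?_
      rw [abs_mul, abs_mul, abs_mul, abs_of_pos (cosh_pos (ν * t)), abs_of_pos hν]
      linarith
    · intro t ht
      have e1 : z * sinh t * (sinh t / (1 + cosh t) * cosh (ν * t)) =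
          z * ((cosh t - 1) * cosh (ν * t)) := by
        have := (hpos t).ne'
        have h3 := Real.cosh_sq t
        field_simp
        nlinarith
      rw [e1]
      -- half-angle comparison
      have a1 : 0 ≤ sinh (ν * t - t / 2) := by
        rw [Real.sinh_nonneg_iff]; nlinarith
      rw [Real.sinh_sub] at a1
      have a2 : 0 ≤ sinh (t / 2) := by rw [Real.sinh_nonneg_iff]; linarith
      have a3 : 0 ≤ sinh (ν * t) := by rw [Real.sinh_nonneg_iff]; positivity
      have a4 := cosh_pos (t / 2)
      have a5 := cosh_pos (ν * t)
      have e2 : sinh t = 2 * sinh (t / 2) * cosh (t / 2) := by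
        rw [← Real.sinh_two_mul]; congr 1; ring
      have e3 : cosh t = 2 * sinh (t / 2) ^ 2 + 1 := by
        have h1 := Real.cosh_two_mul (t / 2)
        have h2 := Real.cosh_sq (t / 2)
        rw [show 2 * (t / 2) = t by ring] at h1
        linarith
      have main : (cosh t - 1) * cosh (ν * t) ≤ 2 * ν * (sinh t * sinh (ν * t)) := by
        have b1 : 0 ≤ 2 * sinh (t / 2) *
            (sinh (ν * t) * cosh (t / 2) - cosh (ν * t) * sinh (t / 2)) := by positivity
        have b2 : 0 ≤ (2 * ν - 1) * (sinh t * sinh (ν * t)) := by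
          rw [e2]
          have : 0 ≤ 2 * ν - 1 := by linarith
          positivity
        rw [e2] at b2
        rw [e2, e3]
        linarith
      have e4 : 1 / (1 + cosh t) * cosh (ν * t) + sinh t / (1 + cosh t) * (sinh (ν * t) * ν) =
          (cosh (ν * t) + ν * (sinh t * sinh (ν * t))) / (1 + cosh t) := by
        field_simp
      rw [e4]
      have : 1 / 2 * cosh (ν * t) ≤
          (cosh (ν * t) + ν * (sinh t * sinh (ν * t))) / (1 + cosh t) := by
        rw [le_div_iff₀ (hpos t)]
        linarith
      linarith

theorem bk_deriv (ν z : ℝ) (hν : 0 < ν) (hz : 0 < z) :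
    HasDerivAt (fun x => besselK ν x)
      (-∫ t in Ioi (0:ℝ), exp (-z * cosh t) * (cosh t * cosh (ν * t))) z := by
  have hcc : Continuous fun t : ℝ => cosh (ν * t) := Real.continuous_cosh.comp (by fun_prop)
  have hcx := Real.continuous_cosh
  have h := (hasDerivAt_integral_of_dominated_loc_of_deriv_le (μ := volume.restrict (Ioi (0:ℝ)))
    (F := fun x t => exp (-x * cosh t) * cosh (ν * t))
    (F' := fun x t => -(exp (-x * cosh t) * (cosh t * cosh (ν * t))))
    (bound := fun t => exp (-(z/2) * cosh t) * (cosh t * cosh (ν * t)))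
    (x₀ := z) (s := Ioi (z/2)) (Ioi_mem_nhds (by linarith)) ?_ (bk_int0 ν z hν hz) ?_ ?_
    (bk_int1 ν (z/2) hν (by linarith)) ?_).2
  · rw [integral_neg] at h
    exact h
  · exact Eventually.of_forall fun x => Continuous.aestronglyMeasurable (by fun_prop)
  · exact Continuous.aestronglyMeasurable (by fun_prop)
  · refine ae_of_all _ fun t x hx => ?_
    have hc := cosh_pos t
    have hc' := cosh_pos (ν * t)
    rw [norm_neg, Real.norm_eq_abs, abs_of_pos (by positivity)]
    have hx' : z / 2 < x := hx
    gcongr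
  · refine ae_of_all _ fun t x _ => ?_
    have h1 := (((hasDerivAt_id x).neg.mul_const (cosh t)).exp).mul_const (cosh (ν * t))
    refine HasDerivAt.congr_deriv (f := fun x => exp (-x * cosh t) * cosh (ν * t)) h1 ?_
    simp only [id, Pi.neg_apply]
    ring

theorem bk_antitone (ν r : ℝ) (hν : 0 < ν) (hc : 0 < ν + r - min ν (1/2)) :
    AntitoneOn (fun x => x ^ (ν + r) * besselK ν x) (Ici (ν + r - min ν (1/2))) := by
  have hd : ∀ x, 0 < x → HasDerivAt (fun x => x ^ (ν + r) * besselK ν x)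
      ((ν + r) * x ^ (ν + r - 1) * besselK ν x + x ^ (ν + r) *
        (-∫ t in Ioi (0:ℝ), exp (-x * cosh t) * (cosh t * cosh (ν * t)))) x := fun x hx =>
    (Real.hasDerivAt_rpow_const (Or.inl hx.ne')).mul (bk_deriv ν x hν hx)
  apply antitoneOn_of_deriv_nonpos (convex_Ici _)
  · exact fun x hx => (hd x (hc.trans_le hx)).continuousAt.continuousWithinAt
  · intro x hx
    rw [interior_Ici] at hx
    exact (hd x (hc.trans hx)).differentiableAt.differentiableWithinAt
  · intro x hx
    rw [interior_Ici] at hx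
    have hx' : ν + r - min ν (1/2) < x := hx
    have hx0 : 0 < x := hc.trans hx
    rw [(hd x hx0).deriv]
    have hk := bk_key ν x hν hx0
    have hK : 0 ≤ besselK ν x := setIntegral_nonneg measurableSet_Ioi fun t _ =>
      mul_nonneg (exp_pos _).le (cosh_pos _).le
    have e : x ^ (ν + r) = x ^ (ν + r - 1) * x := by
      rw [Real.rpow_sub_one hx0.ne']; field_simp
    rw [e]
    have hp : 0 ≤ x ^ (ν + r - 1) := (Real.rpow_pos_of_pos hx0 _).le
    have h1 : (ν + r) * besselK ν x -
        x * ∫ t in Ioi (0:ℝ), exp (-x * cosh t) * (cosh t * cosh (ν * t)) ≤ 0 := by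
      nlinarith
    have h2 := mul_nonpos_of_nonneg_of_nonpos hp h1
    linarith

/-- Uniform bound `z^{ν+r} K_ν(z) ≤ (ν + r − ν₀)^r · 2^{ν−1} Γ(ν)`. -/
theorem rpow_mul_besselK_le
    (ν r : ℝ) (hν : 0 < ν) (hr : r ∈ Set.Icc (0:ℝ) 1) (z : ℝ) (hz : 0 < z) :
    z ^ (ν + r) * besselK ν z ≤
      (ν + r - min ν (1/2)) ^ r * (2 : ℝ) ^ (ν - 1) * Real.Gamma ν := by
  have hsmall : ∀ x, 0 < x → x ≤ ν + r - min ν (1/2) → x ^ (ν + r) * besselK ν x ≤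
      (ν + r - min ν (1/2)) ^ r * (2 : ℝ) ^ (ν - 1) * Real.Gamma ν := by
    intro x hx hxc
    have hG : 0 ≤ (2 : ℝ) ^ (ν - 1) * Real.Gamma ν :=
      mul_nonneg (by positivity) (Real.Gamma_pos_of_pos hν).le
    calc x ^ (ν + r) * besselK ν x = x ^ r * (x ^ ν * besselK ν x) := by
          rw [Real.rpow_add hx]; ring
      _ ≤ x ^ r * ((2 : ℝ) ^ (ν - 1) * Real.Gamma ν) :=
          mul_le_mul_of_nonneg_left (bk_bound0 ν x hν hx) (Real.rpow_pos_of_pos hx _).le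
      _ ≤ (ν + r - min ν (1/2)) ^ r * ((2 : ℝ) ^ (ν - 1) * Real.Gamma ν) :=
          mul_le_mul_of_nonneg_right (Real.rpow_le_rpow hx.le hxc hr.1) hG
      _ = _ := by ring
  rcases hr.1.eq_or_lt with h0 | h0
  · rw [← h0, Real.rpow_zero, add_zero, one_mul]
    exact bk_bound0 ν z hν hz
  · have hc : 0 < ν + r - min ν (1/2) := by
      have := min_le_left ν (1/2)
      linarith
    rcases le_total z (ν + r - min ν (1/2)) with h | h
    · exact hsmall z hz h
    · exact (bk_antitone ν r hν hc self_mem_Ici h h).trans (hsmall _ hc le_rfl)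
end

section
/- Let s ∈ (0,1), r ∈ [0,1], and set ψ_s(z) = (2^{1−s}/Γ(s)) z^s K_s(z) for z > 0. There exists a constant c > 0 depending only on s such that for every z > 0 and every n ∈ ℕ with n ≥ 1, it holds |z^n ψ_s^{(n)}(z)| ≤ c · 8^n · n! · z^{2s−r}, where ψ_s^{(n)} denotes the n-th derivative of ψ_s. -/
/-- `ψ_s(z) = (2^{1−s}/Γ(s)) z^s K_s(z)`. -/
noncomputable def psi (s z : ℝ) : ℝ :=
  (2 ^ (1 - s) / Real.Gamma s) * z ^ s * besselK s z

open Set MeasureTheory Filter Topology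

lemma aux_gamma {a b : ℝ} (ha : 0 < a) (hb : 0 < b) :
    Integrable (fun t : ℝ => Real.exp (-b * Real.exp t) * Real.exp (a * t)) ∧
    ∫ t : ℝ, Real.exp (-b * Real.exp t) * Real.exp (a * t) = (1 / b) ^ a * Real.Gamma a := by
  have himg : Set.image Real.exp univ = Ioi 0 := by rw [image_univ, Real.range_exp]
  have hd : ∀ t ∈ (univ : Set ℝ), HasDerivWithinAt Real.exp (Real.exp t) univ t :=
    fun t _ => (Real.hasDerivAt_exp t).hasDerivWithinAt
  have hfun : (fun t : ℝ => |Real.exp t| • (fun u : ℝ => u ^ (a - 1) * Real.exp (-(b * u))) (Real.exp t))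
      = fun t : ℝ => Real.exp (-b * Real.exp t) * Real.exp (a * t) := by
    funext t
    have h1 : Real.exp t ^ (a - 1) = Real.exp (t * (a - 1)) := (Real.exp_mul _ _).symm
    simp only [abs_of_pos (Real.exp_pos t), smul_eq_mul, h1]
    rw [← mul_assoc, ← Real.exp_add, mul_comm, ← neg_mul]
    congr 2
    ring
  have hint : IntegrableOn (fun u : ℝ => u ^ (a - 1) * Real.exp (-(b * u))) (Ioi 0) := by
    have := integrableOn_rpow_mul_exp_neg_mul_rpow (p := 1) (s := a - 1) (b := b)
      (by linarith) one_pos hb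
    simpa using this
  have h1 := integrableOn_image_iff_integrableOn_abs_deriv_smul MeasurableSet.univ hd
    Real.exp_injective.injOn (fun u : ℝ => u ^ (a - 1) * Real.exp (-(b * u)))
  have h2 := integral_image_eq_integral_abs_deriv_smul MeasurableSet.univ hd
    Real.exp_injective.injOn (fun u : ℝ => u ^ (a - 1) * Real.exp (-(b * u)))
  rw [himg, hfun] at h1
  rw [himg, hfun, Real.integral_rpow_mul_exp_neg_mul_Ioi ha hb] at h2
  rw [integrableOn_univ] at h1
  rw [setIntegral_univ] at h2
  exact ⟨h1.1 hint, h2.symm⟩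

lemma aux_le {a x : ℝ} (hx : 0 < x) (t : ℝ) :
    Real.exp (-x * Real.cosh t) * Real.exp (a * t) ≤
      Real.exp (-(x / 2) * Real.exp t) * Real.exp (a * t) := by
  have h : Real.exp t / 2 ≤ Real.cosh t := by
    rw [Real.cosh_eq]; have := Real.exp_pos (-t); linarith
  refine mul_le_mul_of_nonneg_right (Real.exp_le_exp.2 ?_) (Real.exp_pos _).le
  nlinarith

lemma aux_int {a x : ℝ} (ha : 0 < a) (hx : 0 < x) :
    IntegrableOn (fun t : ℝ => Real.exp (-x * Real.cosh t) * Real.exp (a * t)) (Ioi 0) := by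
  refine Integrable.mono' (aux_gamma ha (half_pos hx)).1.integrableOn
    (Continuous.aestronglyMeasurable (by fun_prop)) (ae_of_all _ fun t => ?_)
  rw [Real.norm_of_nonneg (by positivity)]
  exact aux_le hx t

lemma aux_bound {a x : ℝ} (ha : 0 < a) (hx : 0 < x) :
    ∫ t in Ioi (0:ℝ), Real.exp (-x * Real.cosh t) * Real.exp (a * t) ≤
      (2 / x) ^ a * Real.Gamma a := by
  have h := aux_gamma ha (half_pos hx)
  calc _ ≤ ∫ t in Ioi (0:ℝ), Real.exp (-(x / 2) * Real.exp t) * Real.exp (a * t) :=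
        setIntegral_mono (aux_int ha hx) h.1.integrableOn (fun t => aux_le hx t)
    _ ≤ ∫ t, Real.exp (-(x / 2) * Real.exp t) * Real.exp (a * t) :=
        setIntegral_le_integral h.1 (ae_of_all _ fun t => by positivity)
    _ = _ := by rw [h.2, one_div_div]

lemma cosh_le_exp_of_nonneg {t : ℝ} (ht : 0 ≤ t) : Real.cosh t ≤ Real.exp t := by
  rw [Real.cosh_eq]
  have : Real.exp (-t) ≤ Real.exp t := Real.exp_le_exp.2 (by linarith)
  linarith

lemma abs_sinh_le_exp_of_nonneg {t : ℝ} (ht : 0 ≤ t) : |Real.sinh t| ≤ Real.exp t := by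
  rw [abs_of_nonneg (Real.sinh_nonneg_iff.2 ht), Real.sinh_eq]
  have := Real.exp_pos (-t)
  have := Real.exp_pos t
  linarith

lemma aux_dom {a x : ℝ} (ha : 0 < a) (hx : 0 < x) {f : ℝ → ℝ} (hf : Continuous f)
    (hb : ∀ t, 0 < t → |f t| ≤ Real.exp (a * t)) :
    IntegrableOn (fun t : ℝ => Real.exp (-x * Real.cosh t) * f t) (Ioi 0) := by
  refine Integrable.mono' (aux_int ha hx)
    (Continuous.aestronglyMeasurable (by fun_prop)) ?_
  refine (ae_restrict_mem measurableSet_Ioi).mono fun t ht => ?_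
  rw [norm_mul, Real.norm_of_nonneg (Real.exp_pos _).le]
  gcongr
  exact hb t ht

/-- complex extension of the Bessel function -/
noncomputable def besselC (ν : ℝ) (w : ℂ) : ℂ :=
  ∫ t in Ioi (0:ℝ), Complex.exp (-w * (Real.cosh t : ℂ)) * (Real.cosh (ν * t) : ℂ)

lemma besselC_ofReal (ν x : ℝ) : besselC ν (x : ℂ) = (besselK ν x : ℂ) := by
  unfold besselC besselK
  rw [← integral_complex_ofReal]
  congr 1
  funext t
  push_cast
  rfl

lemma norm_cexp_cosh (w : ℂ) (t : ℝ) :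
    ‖Complex.exp (-w * (Real.cosh t : ℂ))‖ = Real.exp (-w.re * Real.cosh t) := by
  rw [Complex.norm_exp, Complex.re_mul_ofReal, Complex.neg_re]

lemma norm_besselC_le {ν a x : ℝ} (hν : 0 < ν) (hνa : ν ≤ a) (hx : 0 < x) {w : ℂ} (hw : x ≤ w.re) :
    ‖besselC ν w‖ ≤ (2 / x) ^ a * Real.Gamma a := by
  refine le_trans ?_ (aux_bound (hν.trans_le hνa) hx)
  refine norm_integral_le_of_norm_le (aux_int (hν.trans_le hνa) hx) ?_
  refine (ae_restrict_mem measurableSet_Ioi).mono fun t (ht : 0 < t) => ?_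
  rw [norm_mul, norm_cexp_cosh, Complex.norm_real, Real.norm_of_nonneg (Real.cosh_pos _).le]
  gcongr
  calc Real.cosh (ν * t) ≤ Real.exp (ν * t) := cosh_le_exp_of_nonneg (by positivity)
    _ ≤ _ := by gcongr

lemma besselC_hasDerivAt {ν : ℝ} (hν : 0 < ν) {w : ℂ} (hw : 0 < w.re) :
    HasDerivAt (besselC ν) (∫ t in Ioi (0:ℝ), -(Real.cosh t : ℂ) *
      Complex.exp (-w * (Real.cosh t : ℂ)) * (Real.cosh (ν * t) : ℂ)) w := by
  have hs : {v : ℂ | w.re / 2 < v.re} ∈ 𝓝 w :=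
    (isOpen_lt continuous_const Complex.continuous_re).mem_nhds (by simp; linarith)
  refine (hasDerivAt_integral_of_dominated_loc_of_deriv_le
    (F := fun (v : ℂ) (t : ℝ) => Complex.exp (-v * (Real.cosh t : ℂ)) * (Real.cosh (ν * t) : ℂ))
    (F' := fun (v : ℂ) (t : ℝ) => -(Real.cosh t : ℂ) *
      Complex.exp (-v * (Real.cosh t : ℂ)) * (Real.cosh (ν * t) : ℂ))
    (bound := fun t : ℝ => Real.exp (-(w.re / 2) * Real.cosh t) * Real.exp ((1 + ν) * t))
    hs ?_ ?_ ?_ ?_ ?_ ?_).2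
  · exact Eventually.of_forall fun v => Continuous.aestronglyMeasurable (by fun_prop)
  · refine Integrable.mono' (aux_int hν hw) (Continuous.aestronglyMeasurable (by fun_prop)) ?_
    refine (ae_restrict_mem measurableSet_Ioi).mono fun t (ht : 0 < t) => ?_
    rw [norm_mul, norm_cexp_cosh, Complex.norm_real, Real.norm_of_nonneg (Real.cosh_pos _).le]
    gcongr
    exact cosh_le_exp_of_nonneg (by positivity)
  · exact Continuous.aestronglyMeasurable (by fun_prop)
  · refine (ae_restrict_mem measurableSet_Ioi).mono fun t (ht : 0 < t) v hv => ?_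
    have hv : w.re / 2 < v.re := hv
    rw [norm_mul, norm_mul, norm_cexp_cosh, norm_neg, Complex.norm_real, Complex.norm_real,
      Real.norm_of_nonneg (Real.cosh_pos _).le, Real.norm_of_nonneg (Real.cosh_pos _).le]
    have h1 := cosh_le_exp_of_nonneg ht.le
    have h2 := cosh_le_exp_of_nonneg (t := ν * t) (by positivity)
    have h3 : Real.exp (-v.re * Real.cosh t) ≤ Real.exp (-(w.re / 2) * Real.cosh t) := by
      have := Real.cosh_pos t
      gcongr
    have h4 : Real.exp ((1 + ν) * t) = Real.exp t * Real.exp (ν * t) := by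
      rw [← Real.exp_add]; congr 1; ring
    rw [h4]
    have := Real.cosh_pos t
    have := Real.cosh_pos (ν * t)
    calc _ ≤ Real.exp t * Real.exp (-(w.re / 2) * Real.cosh t) * Real.exp (ν * t) := by gcongr
      _ = _ := by ring
  · exact aux_int (by positivity) (half_pos hw)
  · refine ae_of_all _ fun t v _ => ?_
    have h1 : HasDerivAt (fun v : ℂ => -v * (Real.cosh t : ℂ)) (-(Real.cosh t : ℂ)) v := by
      simpa using (hasDerivAt_id v).neg.mul_const (Real.cosh t : ℂ)
    have := h1.cexp.mul_const (Real.cosh (ν * t) : ℂ)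
    refine this.congr_deriv ?_
    ring

lemma besselK_hasDerivAt {ν : ℝ} (hν : 0 < ν) {x : ℝ} (hx : 0 < x) :
    HasDerivAt (besselK ν) (-∫ t in Ioi (0:ℝ), Real.exp (-x * Real.cosh t) *
      (Real.cosh t * Real.cosh (ν * t))) x := by
  have h := (besselC_hasDerivAt hν (w := (x:ℂ)) (by simpa using hx)).real_of_complex
  convert h using 1
  · funext y
    rw [besselC_ofReal, Complex.ofReal_re]
  · rw [← integral_neg, ← Complex.ofReal_re (∫ t in Ioi (0:ℝ), _), ← integral_complex_ofReal]
    congr 2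
    funext t
    push_cast
    ring

lemma parts {s x : ℝ} (hs : 0 < s) (hx : 0 < x) :
    x * ∫ t in Ioi (0:ℝ), Real.exp (-x * Real.cosh t) * (Real.sinh t * Real.sinh (s * t))
      = s * besselK s x := by
  have i1 : IntegrableOn (fun t : ℝ => Real.exp (-x * Real.cosh t) *
      (Real.sinh t * Real.sinh (s * t))) (Ioi 0) := by
    refine aux_dom (a := 1 + s) (by positivity) hx (by fun_prop) fun t ht => ?_
    rw [abs_mul, add_mul, one_mul, Real.exp_add]
    gcongr
    · exact abs_sinh_le_exp_of_nonneg ht.le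
    · exact abs_sinh_le_exp_of_nonneg (by positivity)
  have i2 : IntegrableOn (fun t : ℝ => Real.exp (-x * Real.cosh t) * Real.cosh (s * t)) (Ioi 0) := by
    refine aux_dom hs hx (by fun_prop) fun t ht => ?_
    rw [abs_of_pos (Real.cosh_pos _)]
    exact cosh_le_exp_of_nonneg (by positivity)
  have i3 : IntegrableOn (fun t : ℝ => Real.exp (-x * Real.cosh t) * Real.sinh (s * t)) (Ioi 0) := by
    refine aux_dom hs hx (by fun_prop) fun t ht => ?_
    exact abs_sinh_le_exp_of_nonneg (by positivity)
  have hd : ∀ t : ℝ, HasDerivAt (fun t : ℝ => Real.exp (-x * Real.cosh t) * Real.sinh (s * t))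
      (s * (Real.exp (-x * Real.cosh t) * Real.cosh (s * t)) -
        x * (Real.exp (-x * Real.cosh t) * (Real.sinh t * Real.sinh (s * t)))) t := by
    intro t
    have h1 := ((Real.hasDerivAt_cosh t).const_mul (-x)).exp
    have h2 := ((hasDerivAt_id t).const_mul s).sinh
    refine (h1.mul h2).congr_deriv ?_
    simp only [id]
    ring
  have i4 := (i2.const_mul s).sub (i1.const_mul x)
  have ht := tendsto_zero_of_hasDerivAt_of_integrableOn_Ioi (fun t _ => hd t) i4 i3
  have h := integral_Ioi_of_hasDerivAt_of_tendsto' (fun t _ => hd t) i4 ht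
  rw [integral_sub (i2.const_mul s) (i1.const_mul x), integral_const_mul, integral_const_mul] at h
  simp at h
  unfold besselK
  simp only [neg_mul]
  linarith

lemma psi_hasDerivAt {s x : ℝ} (hs : 0 < s) (hs1 : s < 1) (hx : 0 < x) :
    HasDerivAt (psi s) (-(2 ^ (1 - s) / Real.Gamma s) * (x ^ s * besselK (1 - s) x)) x := by
  have h1 := (Real.hasDerivAt_rpow_const (x := x) (p := s) (Or.inl hx.ne')).const_mul
    (2 ^ (1 - s) / Real.Gamma s)
  have h := h1.mul (besselK_hasDerivAt hs hx)
  refine h.congr_deriv ?_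
  have hp := parts hs hx
  have i1 : IntegrableOn (fun t : ℝ => Real.exp (-x * Real.cosh t) *
      (Real.sinh t * Real.sinh (s * t))) (Ioi 0) := by
    refine aux_dom (a := 1 + s) (by positivity) hx (by fun_prop) fun t ht => ?_
    rw [abs_mul, add_mul, one_mul, Real.exp_add]
    gcongr
    · exact abs_sinh_le_exp_of_nonneg ht.le
    · exact abs_sinh_le_exp_of_nonneg (by positivity)
  have i2 : IntegrableOn (fun t : ℝ => Real.exp (-x * Real.cosh t) *
      (Real.cosh t * Real.cosh (s * t))) (Ioi 0) := by
    refine aux_dom (a := 1 + s) (by positivity) hx (by fun_prop) fun t ht => ?_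
    rw [abs_mul, add_mul, one_mul, Real.exp_add, abs_of_pos (Real.cosh_pos _),
      abs_of_pos (Real.cosh_pos _)]
    have := Real.cosh_pos t
    have := Real.cosh_pos (s * t)
    gcongr
    · exact cosh_le_exp_of_nonneg ht.le
    · exact cosh_le_exp_of_nonneg (by positivity)
  have hK : besselK (1 - s) x =
      (∫ t in Ioi (0:ℝ), Real.exp (-x * Real.cosh t) * (Real.cosh t * Real.cosh (s * t))) -
      ∫ t in Ioi (0:ℝ), Real.exp (-x * Real.cosh t) * (Real.sinh t * Real.sinh (s * t)) := by
    rw [← integral_sub i2 i1]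
    unfold besselK
    congr 1
    funext t
    rw [← mul_sub, sub_mul, one_mul, Real.cosh_sub]
  rw [hK, Real.rpow_sub_one hx.ne']
  set A := ∫ t in Ioi (0:ℝ), Real.exp (-x * Real.cosh t) * (Real.cosh t * Real.cosh (s * t))
  set B := ∫ t in Ioi (0:ℝ), Real.exp (-x * Real.cosh t) * (Real.sinh t * Real.sinh (s * t))
  have : besselK s x = x * B / s := by field_simp; linarith
  rw [this]
  field_simp
  ring

lemma iter_eq {f : ℝ → ℝ} {F : ℂ → ℂ} (hF : DifferentiableOn ℂ F {w | 0 < w.re})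
    (hfF : ∀ x : ℝ, 0 < x → (f x : ℂ) = F x) (n : ℕ) :
    ∀ x : ℝ, 0 < x → ((iteratedDerivWithin n f (Ioi 0) x : ℝ) : ℂ) = iteratedDeriv n F x := by
  have hopen : IsOpen {w : ℂ | 0 < w.re} := isOpen_lt continuous_const Complex.continuous_re
  induction n with
  | zero => simpa using hfF
  | succ n ih =>
    intro x hx
    rw [iteratedDerivWithin_succ, iteratedDeriv_succ,
      derivWithin_of_isOpen isOpen_Ioi hx]
    have hd : DifferentiableAt ℂ (iteratedDeriv n F) x := by
      have hA : AnalyticAt ℂ F x := hF.analyticAt (hopen.mem_nhds (by simpa using hx))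
      rw [iteratedDeriv_eq_iterate]
      exact (hA.iterated_deriv n).differentiableAt
    have h1 : HasDerivAt (fun y : ℝ => iteratedDeriv n F y) (deriv (iteratedDeriv n F) x) x :=
      hd.hasDerivAt.comp_ofReal
    have h2 := hd.hasDerivAt.real_of_complex
    have hev : ∀ᶠ y : ℝ in 𝓝 x, iteratedDeriv n F y = ((iteratedDerivWithin n f (Ioi 0) y : ℝ) : ℂ) := by
      filter_upwards [isOpen_Ioi.mem_nhds hx] with y hy
      exact (ih y hy).symm
    have h3 : HasDerivAt (iteratedDerivWithin n f (Ioi 0)) (deriv (iteratedDeriv n F) x).re x := by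
      refine h2.congr_of_eventuallyEq ?_
      filter_upwards [hev] with y hy
      rw [hy, Complex.ofReal_re]
    rw [h3.deriv]
    have h4 := h3.ofReal_comp
    exact h4.unique (h1.congr_of_eventuallyEq (hev.mono fun y hy => hy.symm))

lemma cauchy_bound {s z a : ℝ} (hs : 0 < s) (hs1 : s < 1) (hz : 0 < z) (ha : 1 - s ≤ a) (m : ℕ) :
    |iteratedDerivWithin m (fun x : ℝ => x ^ s * besselK (1 - s) x) (Ioi 0) z| ≤
      m.factorial * ((2 * z) ^ s * ((4 / z) ^ a * Real.Gamma a)) / (z / 2) ^ m := by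
  have hF : DifferentiableOn ℂ (fun w : ℂ => w ^ (s : ℂ) * besselC (1 - s) w) {w | 0 < w.re} := by
    intro w (hw : 0 < w.re)
    refine DifferentiableAt.differentiableWithinAt ?_
    refine DifferentiableAt.mul ?_ (besselC_hasDerivAt (by linarith) hw).differentiableAt
    exact differentiableAt_id.cpow_const (Or.inl hw)
  have h := iter_eq (f := fun x : ℝ => x ^ s * besselK (1 - s) x) hF (fun x hx => by
    rw [besselC_ofReal, Complex.ofReal_mul, Complex.ofReal_cpow hx.le]) m z hz
  have hball : ∀ w ∈ Metric.closedBall (z : ℂ) (z / 2), z / 2 ≤ w.re ∧ ‖w‖ ≤ 2 * z := by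
    intro w hw
    rw [mem_closedBall_iff_norm] at hw
    have h1 := (Complex.abs_re_le_norm (w - z)).trans hw
    rw [Complex.sub_re, Complex.ofReal_re] at h1
    have h2 := norm_le_norm_add_norm_sub' w (z:ℂ)
    rw [Complex.norm_real, Real.norm_of_nonneg hz.le] at h2
    have := abs_le.1 h1
    constructor <;> linarith
  rw [← Real.norm_eq_abs, ← Complex.norm_real, h]
  refine Complex.norm_iteratedDeriv_le_of_forall_mem_sphere_norm_le m (half_pos hz) ?_ ?_
  · refine (hF.mono fun w hw => ?_).diffContOnCl
    have := (hball w (Metric.closure_ball_subset_closedBall hw)).1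
    show 0 < w.re
    linarith
  · intro w hw
    obtain ⟨h1, h2⟩ := hball w (Metric.sphere_subset_closedBall hw)
    rw [norm_mul, Complex.norm_cpow_real]
    have := norm_besselC_le (ν := 1 - s) (a := a) (by linarith) ha (half_pos hz) h1
    rw [show 2 / (z / 2) = 4 / z by field_simp; norm_num] at this
    gcongr

lemma final_bound {s z a : ℝ} (hs : 0 < s) (hs1 : s < 1) (hz : 0 < z) (ha : 1 - s ≤ a) (m : ℕ) :
    |z ^ (m + 1) * iteratedDerivWithin (m + 1) (psi s) (Ioi 0) z| ≤
      ((2 ^ (1 - s) / Real.Gamma s) * 2 ^ s * (4 ^ a * Real.Gamma a)) * 8 ^ (m + 1) *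
        ((m + 1).factorial : ℝ) * z ^ (1 + s - a) := by
  have hc : 0 < 2 ^ (1 - s) / Real.Gamma s := by
    have := Real.Gamma_pos_of_pos hs
    positivity
  have hG : 0 < Real.Gamma a := Real.Gamma_pos_of_pos (by linarith)
  have he : iteratedDerivWithin (m + 1) (psi s) (Ioi 0) z = -(2 ^ (1 - s) / Real.Gamma s) *
      iteratedDerivWithin m (fun x : ℝ => x ^ s * besselK (1 - s) x) (Ioi 0) z := by
    rw [iteratedDerivWithin_succ']
    have : EqOn (derivWithin (psi s) (Ioi 0)) (fun x : ℝ => -(2 ^ (1 - s) / Real.Gamma s) *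
        (x ^ s * besselK (1 - s) x)) (Ioi 0) := by
      intro x hx
      rw [derivWithin_of_isOpen isOpen_Ioi hx]
      exact (psi_hasDerivAt hs hs1 hx).deriv
    rw [iteratedDerivWithin_congr this hz, iteratedDerivWithin_const_mul_field]
  rw [he, abs_mul, abs_mul, abs_neg, abs_of_pos hc, abs_of_pos (pow_pos hz _)]
  set c := 2 ^ (1 - s) / Real.Gamma s
  have h1 := cauchy_bound hs hs1 hz ha m
  have hf : (m.factorial : ℝ) ≤ (m + 1).factorial := by exact_mod_cast Nat.factorial_le (by omega)
  have hp : (2:ℝ) ^ m ≤ 8 ^ (m + 1) :=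
    (pow_le_pow_left₀ (by norm_num) (by norm_num) m).trans (pow_le_pow_right₀ (by norm_num) (by omega))
  calc _ ≤ z ^ (m + 1) * (c * (m.factorial * ((2 * z) ^ s * ((4 / z) ^ a * Real.Gamma a)) / (z / 2) ^ m)) := by
        gcongr
    _ = (c * 2 ^ s * (4 ^ a * Real.Gamma a)) * 2 ^ m * (m.factorial : ℝ) * z ^ (1 + s - a) := by
        rw [Real.mul_rpow (by norm_num) hz.le, Real.div_rpow (by norm_num) hz.le,
          Real.rpow_sub hz, Real.rpow_add hz, Real.rpow_one, div_pow, pow_succ]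
        have := (Real.rpow_pos_of_pos hz a).ne'
        field_simp
    _ ≤ _ := by gcongr

/-- Bound `|z^n ψ_s^{(n)}(z)| ≤ c 8^n n! z^{2s−r}` with `c` depending
only on `s`. -/
theorem psi_deriv_bound (s : ℝ) (hs : s ∈ Set.Ioo (0:ℝ) 1) :
    ∃ c > 0, ∀ r ∈ Set.Icc (0:ℝ) 1, ∀ z : ℝ, 0 < z → ∀ n : ℕ, 1 ≤ n →
      |z ^ n * iteratedDerivWithin n (psi s) (Set.Ioi (0:ℝ)) z| ≤
        c * 8 ^ n * (n.factorial : ℝ) * z ^ (2 * s - r) := by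
  obtain ⟨h0, h1⟩ := hs
  have hc : 0 < 2 ^ (1 - s) / Real.Gamma s := by
    have := Real.Gamma_pos_of_pos h0
    positivity
  have hG1 : 0 < Real.Gamma (1 - s) := Real.Gamma_pos_of_pos (by linarith)
  have hG2 : 0 < Real.Gamma (2 - s) := Real.Gamma_pos_of_pos (by linarith)
  set A := (2 ^ (1 - s) / Real.Gamma s) * 2 ^ s * (4 ^ (1 - s) * Real.Gamma (1 - s)) with hA
  set B := (2 ^ (1 - s) / Real.Gamma s) * 2 ^ s * (4 ^ (2 - s) * Real.Gamma (2 - s)) with hB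
  have hA0 : 0 < A := by positivity
  have hB0 : 0 < B := by positivity
  refine ⟨A + B, by positivity, ?_⟩
  rintro r ⟨hr0, hr1⟩ z hz n hn
  obtain ⟨m, rfl⟩ : ∃ m, n = m + 1 := ⟨n - 1, by omega⟩
  rcases le_total z 1 with h | h
  · refine (final_bound h0 h1 hz (a := 1 - s) le_rfl m).trans ?_
    rw [← hA]
    have : z ^ (1 + s - (1 - s)) ≤ z ^ (2 * s - r) :=
      Real.rpow_le_rpow_of_exponent_ge hz h (by linarith)
    gcongr
    linarith
  · refine (final_bound h0 h1 hz (a := 2 - s) (by linarith) m).trans ?_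
    rw [← hB]
    have : z ^ (1 + s - (2 - s)) ≤ z ^ (2 * s - r) :=
      Real.rpow_le_rpow_of_exponent_le h (by linarith)
    gcongr
    linarith
end

section
/- Let s ∈ (0,1), λ₁ > 0, r₁ ≥ min(s, 1/2) − s, and r₂ ≥ min(1−s, 1/2) − s. For λ > 0 define ψ_{s,λ}(y) = ψ_s(√λ · y), where ψ_s(z) = (2^{1−s}/Γ(s)) z^s K_s(z). Then there exist constants c₁ > 0, depending only on r₁, s, and λ₁, and c₂ > 0, depending only on r₂, s, and λ₁, such that for every λ ≥ λ₁ and every y ≥ 1 it holds |y^{r₁} ψ_{s,λ}(y)| ≤ c₁ λ^{−r₁/2} e^{−(√λ/2) y} and |y^{r₂} ψ_{s,λ}'(y)| ≤ c₂ λ^{−r₂/2} e^{−(√λ/2) y}. -/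
open MeasureTheory Set Filter Topology

lemma kern_bound (s : ℝ) (hs : s ∈ Set.Ioo (0:ℝ) 1) (a : ℝ) (ha : 0 < a) (z t : ℝ) (hz : a ≤ z) (ht : 0 < t) :
    Real.cosh t * (Real.exp (-z * Real.cosh t) * Real.cosh (s * t)) ≤
      Real.exp (-(3/4) * z) * (12 / (a/4)^3 * Real.exp (-t)) := by
  have hu : 1 ≤ Real.cosh t := Real.one_le_cosh t
  have hcs : Real.cosh (s * t) ≤ Real.cosh t := by
    rw [Real.cosh_le_cosh, abs_of_pos (mul_pos hs.1 ht), abs_of_pos ht]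
    nlinarith [hs.2]
  have h2 : Real.exp t ≤ 2 * Real.cosh t := by
    rw [Real.cosh_eq]; nlinarith [Real.exp_pos (-t)]
  set u := Real.cosh t with hu'
  have h3 : Real.exp (-z * u) ≤ Real.exp (-(3/4) * z) * Real.exp (-(a/4*u)) := by
    rw [← Real.exp_add]; apply Real.exp_le_exp.2
    nlinarith [mul_nonneg (sub_nonneg.2 hz) (by linarith : (0:ℝ) ≤ u),
      mul_nonneg (by linarith : (0:ℝ) ≤ z) (sub_nonneg.2 hu)]
  have h4 : (a/4*u)^3 / 6 ≤ Real.exp (a/4*u) := by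
    have := Real.pow_div_factorial_le_exp (a/4*u) (by positivity) 3
    simpa [Nat.factorial] using this
  have h5 : u * u * Real.exp (-(a/4*u)) ≤ 12 / (a/4)^3 * Real.exp (-t) := by
    rw [Real.exp_neg, Real.exp_neg, ← div_eq_mul_inv, ← div_eq_mul_inv, div_div,
      div_le_div_iff₀ (Real.exp_pos _) (by positivity)]
    calc u * u * ((a/4)^3 * Real.exp t) ≤ u * u * ((a/4)^3 * (2 * u)) := by gcongr
      _ = 12 * ((a/4*u)^3 / 6) := by ring
      _ ≤ _ := by gcongr
  calc u * (Real.exp (-z * u) * Real.cosh (s * t))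
      ≤ u * ((Real.exp (-(3/4) * z) * Real.exp (-(a/4*u))) * u) := by
        have := Real.cosh_pos (s*t)
        gcongr
    _ = Real.exp (-(3/4) * z) * (u * u * Real.exp (-(a/4*u))) := by ring
    _ ≤ _ := by gcongr

lemma kern_bound0 (s : ℝ) (hs : s ∈ Set.Ioo (0:ℝ) 1) (a : ℝ) (ha : 0 < a) (z t : ℝ) (hz : a ≤ z) (ht : 0 < t) :
    Real.exp (-z * Real.cosh t) * Real.cosh (s * t) ≤
      Real.exp (-(3/4) * z) * (12 / (a/4)^3 * Real.exp (-t)) := by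
  refine le_trans ?_ (kern_bound s hs a ha z t hz ht)
  have : 0 < Real.exp (-z * Real.cosh t) * Real.cosh (s * t) :=
    mul_pos (Real.exp_pos _) (Real.cosh_pos _)
  nlinarith [Real.one_le_cosh t]

lemma bound_int (a z : ℝ) : IntegrableOn (fun t : ℝ =>
    Real.exp (-(3/4) * z) * (12 / (a/4)^3 * Real.exp (-t))) (Ioi 0) :=
  ((integrableOn_exp_neg_Ioi 0).const_mul _).const_mul _

lemma bound_int_eq (a z : ℝ) : ∫ t in Ioi (0:ℝ),
    Real.exp (-(3/4) * z) * (12 / (a/4)^3 * Real.exp (-t)) = 12 / (a/4)^3 * Real.exp (-(3/4) * z) := by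
  rw [integral_const_mul, integral_const_mul, integral_exp_neg_Ioi]
  simp [mul_comm]

lemma besselK_bound (s : ℝ) (hs : s ∈ Set.Ioo (0:ℝ) 1) (a : ℝ) (ha : 0 < a) (z : ℝ) (hz : a ≤ z) :
    |besselK s z| ≤ 12 / (a/4)^3 * Real.exp (-(3/4) * z) := by
  rw [← bound_int_eq, ← Real.norm_eq_abs]
  refine norm_integral_le_of_norm_le (bound_int a z) ?_
  refine (ae_restrict_iff' measurableSet_Ioi).2 (Eventually.of_forall fun t ht => ?_)
  rw [Real.norm_of_nonneg (mul_pos (Real.exp_pos _) (Real.cosh_pos _)).le]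
  exact kern_bound0 s hs a ha z t hz ht

lemma besselK_deriv (s : ℝ) (hs : s ∈ Set.Ioo (0:ℝ) 1) (a : ℝ) (ha : 0 < a) (z : ℝ) (hz : a ≤ z) :
    ∃ G, HasDerivAt (besselK s) G z ∧ |G| ≤ 12 / (a/4)^3 * Real.exp (-(3/4) * z) := by
  have hz0 : 0 < z := by linarith
  have key := hasDerivAt_integral_of_dominated_loc_of_deriv_le (μ := volume.restrict (Ioi (0:ℝ)))
    (F := fun z t : ℝ => Real.exp (-z * Real.cosh t) * Real.cosh (s * t))
    (F' := fun z t : ℝ => -(Real.cosh t * (Real.exp (-z * Real.cosh t) * Real.cosh (s * t))))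
    (x₀ := z) (s := Ioi (z/2))
    (bound := fun t => Real.exp (-(3/4) * 0) * (12 / ((z/2)/4)^3 * Real.exp (-t)))
    (Ioi_mem_nhds (by linarith))
    (Eventually.of_forall fun x => by
      apply Continuous.aestronglyMeasurable; fun_prop)
    (by
      refine (bound_int a z).mono' (by apply Continuous.aestronglyMeasurable; fun_prop) ?_
      refine (ae_restrict_iff' measurableSet_Ioi).2 (Eventually.of_forall fun t ht => ?_)
      rw [Real.norm_of_nonneg (mul_pos (Real.exp_pos _) (Real.cosh_pos _)).le]
      exact kern_bound0 s hs a ha z t hz ht)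
    (by apply Continuous.aestronglyMeasurable; fun_prop)
    (by
      refine (ae_restrict_iff' measurableSet_Ioi).2 (Eventually.of_forall fun t ht x hx => ?_)
      rw [norm_neg, Real.norm_of_nonneg (mul_pos (Real.cosh_pos _)
        (mul_pos (Real.exp_pos _) (Real.cosh_pos _))).le]
      have hx' : z/2 < x := hx
      refine (kern_bound s hs (z/2) (by linarith) x t hx'.le ht).trans ?_
      have : -(3/4) * x ≤ -(3/4) * 0 := by linarith
      gcongr)
    (bound_int _ _)
    (by
      refine Eventually.of_forall fun t x hx => ?_
      have h0 : HasDerivAt (fun x : ℝ => -x * Real.cosh t) (-1 * Real.cosh t) x :=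
        (hasDerivAt_neg x).mul_const (Real.cosh t)
      refine (h0.exp.mul_const (Real.cosh (s * t))).congr_deriv ?_
      ring)
  refine ⟨_, key.2, ?_⟩
  rw [← bound_int_eq, ← Real.norm_eq_abs]
  refine norm_integral_le_of_norm_le (bound_int a z) ?_
  refine (ae_restrict_iff' measurableSet_Ioi).2 (Eventually.of_forall fun t ht => ?_)
  rw [norm_neg, Real.norm_of_nonneg (mul_pos (Real.cosh_pos _)
        (mul_pos (Real.exp_pos _) (Real.cosh_pos _))).le]
  exact kern_bound s hs a ha z t hz ht

lemma rpow_exp_bound (p a : ℝ) (ha : 0 < a) : ∃ C > 0, ∀ z, a ≤ z →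
    z ^ p * Real.exp (-(3/4) * z) ≤ C * Real.exp (-(1/2) * z) := by
  obtain ⟨n, hn⟩ := exists_nat_ge p
  refine ⟨a ^ (p - n) * (n.factorial * 4 ^ n), by positivity, fun z hz => ?_⟩
  have hz0 : 0 < z := by linarith
  have h1 : z ^ p ≤ a ^ (p - n) * z ^ n := by
    have : z ^ p = z ^ (p - n) * z ^ n := by
      rw [← Real.rpow_natCast, ← Real.rpow_add hz0]; simp
    rw [this]
    have := Real.rpow_le_rpow_of_nonpos ha hz (by linarith : p - n ≤ 0)
    gcongr
  have h2 : z ^ n ≤ n.factorial * 4 ^ n * Real.exp (z/4) := by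
    have := Real.pow_div_factorial_le_exp (z/4) (by positivity) n
    rw [div_pow, div_div, div_le_iff₀ (by positivity)] at this
    linarith
  have h3 : Real.exp (-(1/2) * z) = Real.exp (z/4) * Real.exp (-(3/4) * z) := by
    rw [← Real.exp_add]; congr 1; ring
  rw [h3]
  calc z ^ p * Real.exp (-(3/4) * z) ≤ a ^ (p - n) * (n.factorial * 4 ^ n * Real.exp (z/4)) * Real.exp (-(3/4) * z) := by
        gcongr
        exact h1.trans (by gcongr)
    _ = _ := by ring

/-- Exponential decay of the scaled functions `ψ_{s,λ}` and their
derivatives, uniformly in `λ ≥ λ₁`. -/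
theorem scaled_psi_exp_decay (s lambda₁ r₁ r₂ : ℝ) (hs : s ∈ Set.Ioo (0:ℝ) 1)
    (hl : 0 < lambda₁)
    (hr₁ : min s (1/2) - s ≤ r₁) (hr₂ : min (1 - s) (1/2) - s ≤ r₂) :
    ∃ c₁ > 0, ∃ c₂ > 0, ∀ l : ℝ, lambda₁ ≤ l → ∀ y : ℝ, 1 ≤ y →
      |y ^ r₁ * psi s (Real.sqrt l * y)| ≤
        c₁ * l ^ (-(r₁ / 2)) * Real.exp (-(Real.sqrt l / 2) * y) ∧
      |y ^ r₂ * deriv (fun t : ℝ => psi s (Real.sqrt l * t)) y| ≤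
        c₂ * l ^ (-(r₂ / 2)) * Real.exp (-(Real.sqrt l / 2) * y) := by
  have hs0 := hs.1
  have hs1 := hs.2
  set a := Real.sqrt lambda₁ with ha'
  have ha : 0 < a := Real.sqrt_pos.2 hl
  set B := 12 / (a/4)^3 with hB'
  have hB : 0 < B := by positivity
  set D := (2:ℝ) ^ (1 - s) / Real.Gamma s with hD'
  have hD : 0 < D := div_pos (by positivity) (Real.Gamma_pos_of_pos hs0)
  obtain ⟨C₁, hC₁, h₁⟩ := rpow_exp_bound (r₁ + s) a ha
  obtain ⟨C₂, hC₂, h₂⟩ := rpow_exp_bound (r₂ + s) a ha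
  obtain ⟨C₃, hC₃, h₃⟩ := rpow_exp_bound (r₂ + s + 1) a ha
  refine ⟨D * B * C₁, by positivity, D * B * (C₂ + C₃), by positivity, fun l hll y hy => ?_⟩
  have hl0 : 0 < l := by linarith
  have hq : 0 < Real.sqrt l := Real.sqrt_pos.2 hl0
  have hq1 : a ≤ Real.sqrt l := Real.sqrt_le_sqrt hll
  have hlr : ∀ r : ℝ, l ^ (-(r/2)) = Real.sqrt l ^ (-r) := by
    intro r
    rw [Real.sqrt_eq_rpow, ← Real.rpow_mul hl0.le]; congr 1; ring
  rw [hlr, hlr]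
  set q := Real.sqrt l with hq'
  obtain ⟨z, hz⟩ : ∃ z, z = q * y := ⟨_, rfl⟩
  have hqz : q ≤ z := by rw [hz]; nlinarith
  have haz : a ≤ z := hq1.trans hqz
  have hz0 : 0 < z := by linarith
  have hyr : ∀ r : ℝ, y ^ r = q ^ (-r) * z ^ r := by
    intro r
    rw [hz, Real.mul_rpow hq.le (by linarith), ← mul_assoc, ← Real.rpow_add hq]; simp
  have hexp : -(q/2) * y = -(1/2) * z := by rw [hz]; ring
  rw [hyr, hyr, hexp, ← hz]
  have hK := besselK_bound s hs a ha z haz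
  obtain ⟨G, hG, hGb⟩ := besselK_deriv s hs a ha z haz
  rw [← hB'] at hK hGb
  constructor
  · have hq2 : 0 < q ^ (-r₁) := by positivity
    rw [psi, ← hD', abs_mul, abs_mul, abs_mul, abs_mul, abs_of_pos hq2, abs_of_pos hD,
      abs_of_pos (by positivity : 0 < z ^ r₁), abs_of_pos (by positivity : 0 < z ^ s)]
    calc q ^ (-r₁) * z ^ r₁ * (D * z ^ s * |besselK s z|)
        ≤ q ^ (-r₁) * z ^ r₁ * (D * z ^ s * (B * Real.exp (-(3/4) * z))) := by gcongr
      _ = D * B * q ^ (-r₁) * (z ^ (r₁ + s) * Real.exp (-(3/4) * z)) := by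
        rw [Real.rpow_add hz0]; ring
      _ ≤ D * B * q ^ (-r₁) * (C₁ * Real.exp (-(1/2) * z)) := by
        have := h₁ z haz
        gcongr
      _ = _ := by ring
  · have hd : HasDerivAt (fun t : ℝ => psi s (q * t))
        ((D * (s * z ^ (s - 1)) * besselK s z + D * z ^ s * G) * q) y := by
      have e1 : HasDerivAt (psi s) (D * (s * z ^ (s - 1)) * besselK s z + D * z ^ s * G) z :=
        ((Real.hasDerivAt_rpow_const (Or.inl hz0.ne')).const_mul D).mul hG
      have e2 : HasDerivAt (fun t : ℝ => q * t) q y := by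
        simpa using (hasDerivAt_id y).const_mul q
      rw [hz] at e1 ⊢
      exact e1.comp y e2
    rw [hd.deriv]
    have hq2 : 0 < q ^ (-r₂) := by positivity
    have hb : |D * (s * z ^ (s - 1)) * besselK s z + D * z ^ s * G| ≤
        D * z ^ (s - 1) * (B * Real.exp (-(3/4) * z)) + D * z ^ s * (B * Real.exp (-(3/4) * z)) := by
      refine (abs_add_le _ _).trans ?_
      rw [abs_mul, abs_mul (D * z ^ s), abs_of_pos (by positivity : 0 < D * (s * z ^ (s - 1))),
        abs_of_pos (by positivity : 0 < D * z ^ s)]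
      have : s * z ^ (s - 1) ≤ z ^ (s - 1) := by
        have : 0 < z ^ (s - 1) := by positivity
        nlinarith
      gcongr
    rw [abs_mul, abs_mul, abs_mul, abs_of_pos hq2, abs_of_pos hq,
      abs_of_pos (by positivity : 0 < z ^ r₂)]
    calc q ^ (-r₂) * z ^ r₂ * (|D * (s * z ^ (s - 1)) * besselK s z + D * z ^ s * G| * q)
        ≤ q ^ (-r₂) * z ^ r₂ * ((D * z ^ (s - 1) * (B * Real.exp (-(3/4) * z)) + D * z ^ s * (B * Real.exp (-(3/4) * z))) * z) := by
          gcongr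
      _ = D * B * q ^ (-r₂) * (z ^ (r₂ + s) * Real.exp (-(3/4) * z) + z ^ (r₂ + s + 1) * Real.exp (-(3/4) * z)) := by
        rw [Real.rpow_add hz0, Real.rpow_add hz0, Real.rpow_add hz0, Real.rpow_sub hz0, Real.rpow_one]
        field_simp
      _ ≤ D * B * q ^ (-r₂) * (C₂ * Real.exp (-(1/2) * z) + C₃ * Real.exp (-(1/2) * z)) := by
        have := h₂ z haz
        have := h₃ z haz
        gcongr
      _ = _ := by ring
end
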